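/- For a complex number x with |x| < 1, set D_y(x) = Σ_{r≥0} (2r+1) x^{16(2r+1)²} + Σ_{0≤r<s} (2r+2s+2) x^{16(2r+1)(2s+1)}, D_{yz}(x) = Σ_{r,s≥1} [ −(4r+4s−2) x^{32(2r−1)s} + (2r+2s) x^{64rs} ], and F(x) = ∏_{n=1}^∞ (1 − xⁿ). Then ( D_{yz}(x) − 1/4 )² · 16 x^{32} F(x^{64})^{24} = D_y(x)² · ( 64 x^{32} F(x^{64})^{24} + F(x^{32})^{24} ). (This is the cleared-denominator, squared form of the statement that the generalized SYZ map σ(q_d) = (d_{yz}(q_d) − (4q_d⁴)^{−1})/d_y(q_d) of ℙ¹_{2,4,4} equals the inverse mirror map −2(1 + η(q)^{24}/(2⁶η(q²)^{24}))^{1/2} with q = x^{32}.) -/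

import Mathlib

open scoped BigOperators

/-- The Euler product `F(x) = ∏_{n=1}^∞ (1 − xⁿ)`. -/
noncomputable def eulerF (x : ℂ) : ℂ := ∏' n : ℕ, (1 - x ^ (n + 1))

/-- `D_y(x) = Σ_{r≥0} (2r+1) x^{16(2r+1)²} + Σ_{0≤r<s} (2r+2s+2) x^{16(2r+1)(2s+1)}`,
which is `x⁴·d_y(x)` for the coefficient `d_y` of `y⁴` in the open
Gromov–Witten potential of `ℙ¹_{2,4,4}`. -/
noncomputable def Dy (x : ℂ) : ℂ :=
  (∑' r : ℕ, (2 * (r : ℂ) + 1) * x ^ (16 * (2 * r + 1) ^ 2))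
    + ∑' p : {p : ℕ × ℕ // p.1 < p.2},
        (2 * ((p : ℕ × ℕ).1 : ℂ) + 2 * ((p : ℕ × ℕ).2 : ℂ) + 2)
          * x ^ (16 * (2 * (p : ℕ × ℕ).1 + 1) * (2 * (p : ℕ × ℕ).2 + 1))

/-- `D_{yz}(x) = Σ_{r,s≥1} [−(4r+4s−2) x^{32(2r−1)s} + (2r+2s) x^{64rs}]`,
which is `x⁴·d_{yz}(x)` for the coefficient `d_{yz}` of `y²z²` in the open
Gromov–Witten potential of `ℙ¹_{2,4,4}` (indexed by `r = k+1`, `s = l+1`). -/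
noncomputable def Dyz (x : ℂ) : ℂ :=
  ∑' p : ℕ × ℕ,
    (-(4 * ((p.1 : ℂ) + 1) + 4 * ((p.2 : ℂ) + 1) - 2)
        * x ^ (32 * (2 * (p.1 + 1) - 1) * (p.2 + 1))
      + (2 * ((p.1 : ℂ) + 1) + 2 * ((p.2 : ℂ) + 1)) * x ^ (64 * (p.1 + 1) * (p.2 + 1)))

namespace SYZ
open Finset Filter Topology

/-- finite Euler product -/
noncomputable def Q (q : ℂ) (m : ℕ) : ℂ := ∏ k ∈ range m, (1 - q ^ (k + 1))

lemma Q_succ (q : ℂ) (m : ℕ) : Q q (m + 1) = Q q m * (1 - q ^ (m + 1)) := by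
  simp [Q, prod_range_succ]

lemma Q_zero (q : ℂ) : Q q 0 = 1 := by simp [Q]

lemma one_sub_ne {q : ℂ} (hq : ‖q‖ < 1) (m : ℕ) : 1 - q ^ (m + 1) ≠ 0 := by
  intro h
  have h1 : q ^ (m + 1) = 1 := by linear_combination -h
  have h2 : ‖q‖ ^ (m + 1) = 1 := by rw [← norm_pow, h1, norm_one]
  have h3 := pow_lt_one₀ (norm_nonneg q) hq (Nat.succ_ne_zero m)
  exact absurd h2 h3.ne

lemma Q_ne {q : ℂ} (hq : ‖q‖ < 1) (m : ℕ) : Q q m ≠ 0 :=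
  prod_ne_zero_iff.mpr fun k _ => one_sub_ne hq k

/-- q-binomial coefficient `[2N+1, N-n]`. -/
noncomputable def B (q : ℂ) (N n : ℕ) : ℂ :=
  if n ≤ N then Q q (2 * N + 1) / (Q q (N - n) * Q q (N + n + 1)) else 0

lemma B_add (q : ℂ) (j n : ℕ) :
    B q (n + j) n = Q q (2 * (n + j) + 1) / (Q q j * Q q (2 * n + j + 1)) := by
  unfold B
  rw [if_pos (by omega)]
  congr 3 <;> omega

lemma B_gt (q : ℂ) {N n : ℕ} (h : N < n) : B q N n = 0 := by
  unfold B
  rw [if_neg (by omega)]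

lemma B_self {q : ℂ} (hq : ‖q‖ < 1) (N : ℕ) : B q N N = 1 := by
  have := B_add q 0 N
  simp only [Nat.add_zero, Q_zero, one_mul] at this
  rw [this, div_self (Q_ne hq _)]

lemma B_rec_zero {q : ℂ} (hq : ‖q‖ < 1) (N : ℕ) :
    B q (N + 1) 0 = (1 + q ^ (2 * N + 2)) * B q N 0 + q ^ (N + 1) * B q N 0
      + q ^ (N + 2) * B q N 1 := by
  rcases N with _ | j
  · rw [B_gt q (by omega : 0 < 1), B_self hq, ← Nat.zero_add (0 + 1), B_add]
    have h1 := one_sub_ne hq 0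
    have h2 := one_sub_ne hq 1
    simp only [Nat.mul_zero, Nat.mul_one, Nat.zero_add, Nat.reduceAdd, Q_succ, Q_zero]
    simp only [Nat.zero_add, Nat.reduceAdd, pow_one] at h1 h2 ⊢
    field_simp
    ring
  · have e1 := B_add q (j + 2) 0
    have e2 := B_add q (j + 1) 0
    have e3 := B_add q j 1
    rw [show 0 + (j + 2) = j + 1 + 1 by omega] at e1
    rw [show 0 + (j + 1) = j + 1 by omega] at e2
    rw [show 1 + j = j + 1 by omega] at e3
    rw [e1, e2, e3]
    have hQ := Q_ne hq j
    have hQ2 := Q_ne hq (2 * j + 3)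
    have h1 := one_sub_ne hq j
    have h2 := one_sub_ne hq (j + 1)
    have h3 := one_sub_ne hq (j + 2)
    rw [show 2 * (j + 1 + 1) + 1 = (2 * j + 3) + 1 + 1 by ring,
      show 2 * (j + 1) + 1 = 2 * j + 3 by ring,
      show 2 * 1 + j + 1 = j + 1 + 1 + 1 by ring]
    simp only [Q_succ q (j + 2), Q_succ q (j + 1), Q_succ q j,
      Q_succ q (2 * j + 3 + 1), Q_succ q (2 * j + 3)]
    rw [show j + 1 + 1 + 1 = j + 2 + 1 by ring]
    field_simp
    ring

lemma B_rec_succ {q : ℂ} (hq : ‖q‖ < 1) (N k : ℕ) (hk : k ≤ N) :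
    B q (N + 1) (k + 1) = (1 + q ^ (2 * N + 2)) * B q N (k + 1) + q ^ (N - k) * B q N k
      + q ^ (N + k + 3) * B q N (k + 2) := by
  obtain ⟨i, rfl⟩ := Nat.exists_eq_add_of_le hk
  rcases i with _ | i
  · simp only [Nat.add_zero]
    rw [B_self hq (k + 1), B_self hq k, B_gt q (by omega : k < k + 1),
      B_gt q (by omega : k < k + 2)]
    simp
  rcases i with _ | j
  · rw [Nat.zero_add, B_self hq, B_gt q (by omega : k + 1 < k + 2), B_add q 1 (k + 1), B_add q 1 k]
    have h1 := one_sub_ne hq 0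
    have h2 := one_sub_ne hq (2 * k + 3)
    have h3 := one_sub_ne hq (2 * k + 1)
    have hQ2 := Q_ne hq (2 * k + 2)
    have hQ1 : Q q 1 = 1 - q := by simp [Q]
    rw [show 2 * (k + 1 + 1) + 1 = 2 * k + 2 + 1 + 1 + 1 by ring,
      show 2 * (k + 1) + 1 + 1 = 2 * k + 2 + 1 + 1 by ring,
      show 2 * (k + 1) + 1 = 2 * k + 2 + 1 by ring,
      show 2 * k + 1 + 1 = 2 * k + 2 by ring,
      show k + 1 - k = 0 + 1 by omega]
    have h4 := one_sub_ne hq (2 * k + 2)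
    simp only [Q_succ q (2 * k + 2 + 1 + 1), Q_succ q (2 * k + 2 + 1), Q_succ q (2 * k + 2),
      hQ1]
    simp only [Nat.zero_add, pow_one] at h1 ⊢
    field_simp
    ring
  · have e1 := B_add q (j + 2) (k + 1)
    have e2 := B_add q (j + 1) (k + 1)
    have e3 := B_add q (j + 2) k
    have e4 := B_add q j (k + 2)
    rw [show k + 1 + (j + 2) = k + (j + 2) + 1 by omega] at e1
    rw [show k + 1 + (j + 1) = k + (j + 2) by omega] at e2
    rw [show k + 2 + j = k + (j + 2) by omega] at e4
    rw [show j + 1 + 1 = j + 2 by rfl, e1, e2, e3, e4]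
    have hQ := Q_ne hq j
    have hQ1 := Q_ne hq (2 * k + j + 3)
    have hQ2 := Q_ne hq (2 * (k + j) + 5)
    have h1 := one_sub_ne hq j
    have h2 := one_sub_ne hq (j + 1)
    have h3 := one_sub_ne hq (2 * k + j + 3)
    have h4 := one_sub_ne hq (2 * k + j + 3 + 1)
    rw [show 2 * (k + (j + 2) + 1) + 1 = (2 * (k + j) + 5) + 1 + 1 by ring,
      show 2 * (k + (j + 2)) + 1 = 2 * (k + j) + 5 by ring,
      show 2 * (k + 1) + (j + 2) + 1 = 2 * k + j + 3 + 1 + 1 by ring,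
      show 2 * (k + 1) + (j + 1) + 1 = 2 * k + j + 3 + 1 by ring,
      show 2 * (k + 2) + j + 1 = 2 * k + j + 3 + 1 + 1 by ring,
      show 2 * k + (j + 2) + 1 = 2 * k + j + 3 by ring,
      show k + (j + 2) - k = j + 2 by omega]
    simp only [Q_succ q (j + 1), Q_succ q j,
      Q_succ q (2 * k + j + 3 + 1), Q_succ q (2 * k + j + 3),
      Q_succ q (2 * (k + j) + 5 + 1), Q_succ q (2 * (k + j) + 5)]
    field_simp
    ring

/-- Chebyshev-like polynomials -/
noncomputable def p (y : ℂ) : ℕ → ℂ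
  | 0 => 1
  | 1 => y - 1
  | (n + 2) => y * p y (n + 1) - p y n

lemma p_shift (y : ℂ) (e : ℕ → ℂ) (M : ℕ) :
    ∑ n ∈ range (M + 1), e n * (y * p y n)
      = e 0 * p y 0 + ∑ n ∈ range M, e (n + 1) * p y n
        + ∑ n ∈ range (M + 1), e n * p y (n + 1) := by
  induction M with
  | zero => simp [p]; ring
  | succ M ih =>
    rw [sum_range_succ, ih, sum_range_succ (fun n => e (n + 1) * p y n) M,
      sum_range_succ (fun n => e n * p y (n + 1)) (M + 1)]
    have : p y (M + 1 + 1) = y * p y (M + 1) - p y M := rfl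
    rw [this]; ring

lemma tri_succ (n : ℕ) : (n + 1) * (n + 1 + 1) / 2 = n * (n + 1) / 2 + (n + 1) := by
  rw [show (n + 1) * (n + 1 + 1) = n * (n + 1) + (n + 1) * 2 by ring,
    Nat.add_mul_div_right _ _ (by norm_num)]

lemma finite_jtp {q : ℂ} (hq : ‖q‖ < 1) (y : ℂ) (N : ℕ) :
    ∏ k ∈ range N, (1 + y * q ^ (k + 1) + q ^ (2 * (k + 1)))
      = ∑ n ∈ range (N + 1), B q N n * q ^ (n * (n + 1) / 2) * p y n := by
  induction N with
  | zero => simp [B_self hq, p]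
  | succ N ih =>
    rw [prod_range_succ, ih]
    set e : ℕ → ℂ := fun n => B q N n * q ^ (n * (n + 1) / 2) with he
    have h0 : ∀ n, N < n → e n = 0 := fun n hn => by simp [he, B_gt q hn]
    have key : (∑ n ∈ range (N + 1), e n * p y n) * (1 + y * q ^ (N + 1) + q ^ (2 * (N + 1)))
        = (1 + q ^ (2 * (N + 1))) * (∑ n ∈ range (N + 1), e n * p y n)
          + q ^ (N + 1) * ∑ n ∈ range (N + 1), e n * (y * p y n) := by
      have : ∑ n ∈ range (N + 1), e n * (y * p y n) = y * ∑ n ∈ range (N + 1), e n * p y n := by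
        rw [mul_sum]; exact sum_congr rfl fun _ _ => by ring
      rw [this]; ring
    rw [key, p_shift]
    -- extend the ranges
    have x1 : ∑ n ∈ range (N + 1), e n * p y n
        = e 0 * p y 0 + ∑ n ∈ range (N + 1), e (n + 1) * p y (n + 1) := by
      have := sum_range_succ (fun n => e n * p y n) (N + 1)
      rw [h0 (N + 1) (by omega), sum_range_succ'] at this
      linear_combination -this
    have x2 : ∑ n ∈ range N, e (n + 1) * p y n
        = e 1 * p y 0 + ∑ n ∈ range (N + 1), e (n + 2) * p y (n + 1) := by
      have h2 := sum_range_succ (fun n => e (n + 1) * p y n) N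
      have h3 := sum_range_succ (fun n => e (n + 1) * p y n) (N + 1)
      rw [h0 (N + 1) (by omega)] at h2
      rw [h0 (N + 1 + 1) (by omega), sum_range_succ'] at h3
      simp only [Nat.zero_add] at h3
      linear_combination -h2 - h3
    rw [x1, x2, sum_range_succ' _ (N + 1), B_rec_zero hq]
    have x3 : ∑ k ∈ range (N + 1), B q (N + 1) (k + 1) * q ^ ((k + 1) * (k + 1 + 1) / 2)
          * p y (k + 1)
        = ∑ k ∈ range (N + 1), ((1 + q ^ (2 * (N + 1))) * (e (k + 1) * p y (k + 1))
            + q ^ (N + 1) * (e k * p y (k + 1) + e (k + 2) * p y (k + 1))) := by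
      refine sum_congr rfl fun k hk => ?_
      have hk' : k ≤ N := by simpa [Nat.lt_succ_iff] using hk
      rw [B_rec_succ hq N k hk']
      simp only [he, tri_succ (k + 1), tri_succ k]
      obtain ⟨i, rfl⟩ := Nat.exists_eq_add_of_le hk'
      rw [Nat.add_sub_cancel_left]
      ring
    rw [x3, sum_add_distrib, ← mul_sum, ← mul_sum, sum_add_distrib]
    simp only [he, p]
    norm_num
    ring
end SYZ


namespace SYZ
open Finset Filter Topology

lemma Q_tendsto {q : ℂ} (hq : ‖q‖ < 1) : Tendsto (Q q) atTop (𝓝 (eulerF q)) :=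
  (ModularForm.multipliable_one_sub_pow hq).hasProd.tendsto_prod_nat

lemma eulerF_ne {q : ℂ} (hq : ‖q‖ < 1) : eulerF q ≠ 0 := by
  have := tprod_one_add_ne_zero_of_summable (f := fun n : ℕ => -q ^ (n + 1)) ?_ ?_
  · simpa [eulerF, sub_eq_add_neg] using this
  · intro i; simpa [sub_eq_add_neg] using one_sub_ne hq i
  · simpa using (summable_nat_add_iff 1).mpr (summable_geometric_of_lt_one (norm_nonneg _) hq)

lemma B_tendsto {q : ℂ} (hq : ‖q‖ < 1) (n : ℕ) :
    Tendsto (fun N => B q N n) atTop (𝓝 (eulerF q)⁻¹) := by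
  have hF := eulerF_ne hq
  have h1 : Tendsto (fun N => Q q (2 * N + 1)) atTop (𝓝 (eulerF q)) :=
    (Q_tendsto hq).comp (tendsto_atTop_mono (fun N => by simp; omega) tendsto_id)
  have h2 : Tendsto (fun N => Q q (N - n)) atTop (𝓝 (eulerF q)) :=
    (Q_tendsto hq).comp (tendsto_sub_atTop_nat n)
  have h3 : Tendsto (fun N => Q q (N + n + 1)) atTop (𝓝 (eulerF q)) :=
    (Q_tendsto hq).comp (tendsto_atTop_mono (fun N => by simp; omega) tendsto_id)
  have h4 := h1.div (h2.mul h3) (mul_ne_zero hF hF)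
  have e : eulerF q / (eulerF q * eulerF q) = (eulerF q)⁻¹ := by field_simp
  rw [e] at h4
  refine h4.congr' ?_
  filter_upwards [eventually_ge_atTop n] with N hN
  simp [B, hN]

lemma B_bound {q : ℂ} (hq : ‖q‖ < 1) : ∃ C : ℝ, ∀ N n, ‖B q N n‖ ≤ C := by
  obtain ⟨C1, h1⟩ := (Q_tendsto hq).norm.bddAbove_range
  obtain ⟨C2, h2⟩ := ((Q_tendsto hq).inv₀ (eulerF_ne hq)).norm.bddAbove_range
  have h1 : ∀ m, ‖Q q m‖ ≤ C1 := fun m => h1 ⟨m, rfl⟩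
  have h2 : ∀ m, ‖(Q q m)⁻¹‖ ≤ C2 := fun m => h2 ⟨m, rfl⟩
  have p1 : 0 ≤ C1 := (norm_nonneg _).trans (h1 0)
  have p2 : 0 ≤ C2 := (norm_nonneg _).trans (h2 0)
  refine ⟨C1 * (C2 * C2), fun N n => ?_⟩
  unfold B
  split_ifs
  · rw [div_eq_mul_inv, mul_inv, norm_mul, norm_mul]
    gcongr
    · exact h1 _
    · exact h2 _
    · exact h2 _
  · simp; positivity

lemma tannery {q : ℂ} (hq : ‖q‖ < 1) (f : ℕ → ℂ) (hf : Summable fun n => ‖f n‖) :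
    Tendsto (fun N => ∑ n ∈ range (N + 1), B q N n * f n) atTop
      (𝓝 ((eulerF q)⁻¹ * ∑' n, f n)) := by
  obtain ⟨C, hC⟩ := B_bound hq
  have h := tendsto_tsum_of_dominated_convergence (𝓕 := atTop)
    (f := fun N n => B q N n * f n) (g := fun n => (eulerF q)⁻¹ * f n)
    (bound := fun n => C * ‖f n‖) (hf.mul_left C)
    (fun n => (B_tendsto hq n).mul_const _)
    (Eventually.of_forall fun N n => by rw [norm_mul]; gcongr; exact hC N n)
  rw [tsum_mul_left] at h
  refine h.congr fun N => ?_
  refine tsum_eq_sum fun n hn => ?_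
  rw [B_gt q (by simpa using hn), zero_mul]

lemma le_tri (n : ℕ) : n ≤ n * (n + 1) / 2 := by
  rw [Nat.le_div_iff_mul_le (by norm_num)]
  rcases n with _ | n
  · simp
  · nlinarith

lemma pow_tri_le {r : ℝ} (h0 : 0 ≤ r) (h1 : r < 1) (n : ℕ) : r ^ (n * (n + 1) / 2) ≤ r ^ n :=
  pow_le_pow_of_le_one h0 h1.le (le_tri n)

lemma p_two (n : ℕ) : p 2 n = 1 ∧ p 2 (n + 1) = 1 := by
  induction n with
  | zero => simp [p]; norm_num
  | succ n ih => refine ⟨ih.2, ?_⟩; rw [p, ih.1, ih.2]; norm_num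

lemma p_neg_two (n : ℕ) : p (-2) n = (-1) ^ n * (2 * n + 1) ∧
    p (-2) (n + 1) = (-1) ^ (n + 1) * (2 * (n + 1 : ℕ) + 1) := by
  induction n with
  | zero => simp [p]; norm_num
  | succ n ih => refine ⟨ih.2, ?_⟩; rw [p, ih.1, ih.2]; push_cast; ring

/-- Gauss: `ψ(q) F(q) = F(q²)²`. -/
noncomputable def psi (q : ℂ) : ℂ := ∑' n : ℕ, q ^ (n * (n + 1) / 2)

lemma norm_sq_lt {q : ℂ} (hq : ‖q‖ < 1) : ‖q ^ 2‖ < 1 := by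
  rw [norm_pow]; exact pow_lt_one₀ (norm_nonneg _) hq (by norm_num)

lemma summable_tri {q : ℂ} (hq : ‖q‖ < 1) : Summable fun n : ℕ => ‖q ^ (n * (n + 1) / 2)‖ := by
  refine Summable.of_nonneg_of_le (fun _ => norm_nonneg _) (fun n => ?_)
    (summable_geometric_of_lt_one (norm_nonneg q) hq)
  rw [norm_pow]; exact pow_tri_le (norm_nonneg _) hq n

lemma summable_lin {q : ℂ} (hq : ‖q‖ < 1) : Summable fun n : ℕ => (2 * n + 1) * ‖q‖ ^ n := by
  have h1 := summable_pow_mul_geometric_of_norm_lt_one 1 (r := ‖q‖) (by simpa using hq)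
  have h2 := summable_geometric_of_lt_one (norm_nonneg q) hq
  refine ((h1.mul_left 2).add h2).congr fun n => ?_
  simp; ring

lemma psi_mul {q : ℂ} (hq : ‖q‖ < 1) : psi q * eulerF q = eulerF (q ^ 2) ^ 2 := by
  have hF := eulerF_ne hq
  have h := tannery hq (fun n => q ^ (n * (n + 1) / 2)) (summable_tri hq)
  have h2 : Tendsto (fun N => (Q (q ^ 2) N / Q q N) ^ 2) atTop
      (𝓝 ((eulerF (q ^ 2) / eulerF q) ^ 2)) :=
    ((Q_tendsto (norm_sq_lt hq)).div (Q_tendsto hq) hF).pow 2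
  have e : ∀ N, ∑ n ∈ range (N + 1), B q N n * q ^ (n * (n + 1) / 2)
      = (Q (q ^ 2) N / Q q N) ^ 2 := by
    intro N
    have := finite_jtp hq 2 N
    simp only [(p_two _).1, mul_one] at this
    rw [← this, Q, Q, ← prod_div_distrib, ← prod_pow]
    refine prod_congr rfl fun k _ => ?_
    have hk := one_sub_ne hq k
    field_simp
    ring
  have := tendsto_nhds_unique (h.congr e) h2
  change (eulerF q)⁻¹ * psi q = _ at this
  field_simp at this
  linear_combination this

/-- Jacobi: `F³ = ∑ (-1)ⁿ (2n+1) q^{n(n+1)/2}`. -/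
lemma jacobi_cube {q : ℂ} (hq : ‖q‖ < 1) :
    ∑' n : ℕ, (-1 : ℂ) ^ n * (2 * n + 1) * q ^ (n * (n + 1) / 2) = eulerF q ^ 3 := by
  have hF := eulerF_ne hq
  have hs : Summable fun n : ℕ => ‖(-1 : ℂ) ^ n * (2 * n + 1) * q ^ (n * (n + 1) / 2)‖ := by
    refine Summable.of_nonneg_of_le (fun _ => norm_nonneg _) (fun n => ?_) (summable_lin hq)
    have : ‖(2 * (n : ℂ) + 1)‖ = 2 * n + 1 := by
      have := Complex.norm_natCast (2 * n + 1)
      push_cast at this; exact this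
    rw [norm_mul, norm_mul, norm_pow, norm_neg, norm_one, one_pow, one_mul, norm_pow, this]
    exact mul_le_mul_of_nonneg_left (pow_tri_le (norm_nonneg _) hq n) (by positivity)
  have h := tannery hq _ hs
  have h2 : Tendsto (fun N => (Q q N) ^ 2) atTop (𝓝 (eulerF q ^ 2)) := (Q_tendsto hq).pow 2
  have e : ∀ N, ∑ n ∈ range (N + 1), B q N n * ((-1 : ℂ) ^ n * (2 * n + 1) * q ^ (n * (n + 1) / 2))
      = (Q q N) ^ 2 := by
    intro N
    have := finite_jtp hq (-2) N
    simp only [(p_neg_two _).1] at this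
    rw [Q, ← prod_pow]
    calc _ = _ := sum_congr rfl fun n _ => by ring
      _ = _ := this.symm
      _ = _ := prod_congr rfl fun k _ => by ring
  have := tendsto_nhds_unique (h.congr e) h2
  field_simp at this
  linear_combination this

lemma p_theta {q : ℂ} (h0 : q ≠ 0) (n : ℕ) :
    (1 - q) * p (-(q + q⁻¹)) n * q ^ n = (-1) ^ n * (1 - q ^ (2 * n + 1)) ∧
    (1 - q) * p (-(q + q⁻¹)) (n + 1) * q ^ (n + 1)
      = (-1) ^ (n + 1) * (1 - q ^ (2 * (n + 1) + 1)) := by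
  induction n with
  | zero =>
    refine ⟨by simp [p], ?_⟩
    simp only [p]; field_simp; ring
  | succ n ih =>
    refine ⟨ih.2, ?_⟩
    rw [p]
    have : (1 - q) * (-(q + q⁻¹) * p (-(q + q⁻¹)) (n + 1) - p (-(q + q⁻¹)) n) * q ^ (n + 1 + 1)
      = -(q ^ 2 + 1) * ((1 - q) * p (-(q + q⁻¹)) (n + 1) * q ^ (n + 1))
        - q ^ 2 * ((1 - q) * p (-(q + q⁻¹)) n * q ^ n) := by
      generalize p (-(q + q⁻¹)) (n + 1) = a
      generalize p (-(q + q⁻¹)) n = b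
      field_simp
      ring
    rw [this, ih.1, ih.2]
    ring

lemma Q_even_odd (q : ℂ) (N : ℕ) :
    (∏ k ∈ range N, (1 - q ^ (2 * k + 1))) * Q (q ^ 2) N = Q q (2 * N) := by
  induction N with
  | zero => simp [Q]
  | succ N ih =>
    rw [prod_range_succ, Q_succ, show 2 * (N + 1) = 2 * N + 1 + 1 by ring, Q_succ, Q_succ, ← ih]
    ring

lemma odd_prod (q : ℂ) (N : ℕ) : (1 - q) * ∏ k ∈ range N, (1 - q ^ (2 * k + 3))
    = ∏ k ∈ range (N + 1), (1 - q ^ (2 * k + 1)) := by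
  rw [prod_range_succ']; simp [mul_add]; ring

/-- Gauss: `∑ (-1)^n q^{n²} F(q²) = F(q)²`. -/
lemma theta4_nat {q : ℂ} (hq : ‖q‖ < 1) (h0 : q ≠ 0) :
    (∑' n : ℕ, (-1 : ℂ) ^ n * (q ^ (n ^ 2) - q ^ ((n + 1) ^ 2))) * eulerF (q ^ 2)
      = eulerF q ^ 2 := by
  have hq2 := norm_sq_lt hq
  have hF := eulerF_ne hq2
  have hs : Summable fun n : ℕ => ‖(-1 : ℂ) ^ n * (q ^ (n ^ 2) - q ^ ((n + 1) ^ 2))‖ := by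
    refine Summable.of_nonneg_of_le (fun _ => norm_nonneg _) (fun n => ?_)
      ((summable_geometric_of_lt_one (norm_nonneg q) hq).mul_left 2)
    rw [norm_mul, norm_pow, norm_neg, norm_one, one_pow, one_mul]
    refine (norm_sub_le _ _).trans ?_
    rw [norm_pow, norm_pow, two_mul]
    exact add_le_add (pow_le_pow_of_le_one (norm_nonneg _) hq.le (by nlinarith [Nat.le_self_pow (two_ne_zero) n]))
      (pow_le_pow_of_le_one (norm_nonneg _) hq.le (by nlinarith [Nat.le_self_pow (two_ne_zero) n]))
  have h := tannery hq2 _ hs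
  have hO : Tendsto (fun N => ∏ k ∈ range N, (1 - q ^ (2 * k + 1))) atTop
      (𝓝 (eulerF q / eulerF (q ^ 2))) := by
    have h1 : Tendsto (fun N => Q q (2 * N)) atTop (𝓝 (eulerF q)) :=
      (Q_tendsto hq).comp (tendsto_atTop_mono (fun N => by simp; omega) tendsto_id)
    refine (h1.div (Q_tendsto hq2) hF).congr fun N => ?_
    simp only [Pi.div_apply]
    rw [← Q_even_odd, mul_div_assoc, div_self (Q_ne hq2 N), mul_one]
  have h2 := hO.mul (hO.comp (tendsto_add_atTop_nat 1))
  have e : ∀ N, ∑ n ∈ range (N + 1), B (q ^ 2) N n * ((-1 : ℂ) ^ n * (q ^ (n ^ 2) - q ^ ((n + 1) ^ 2)))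
      = (∏ k ∈ range N, (1 - q ^ (2 * k + 1))) * (∏ k ∈ range (N + 1), (1 - q ^ (2 * k + 1))) := by
    intro N
    have := finite_jtp hq2 (-(q + q⁻¹)) N
    rw [← odd_prod, mul_left_comm, ← prod_mul_distrib]
    have e1 : ∀ k, (1 - q ^ (2 * k + 1)) * (1 - q ^ (2 * k + 3))
        = 1 + (-(q + q⁻¹)) * (q ^ 2) ^ (k + 1) + (q ^ 2) ^ (2 * (k + 1)) := by
      intro k
      field_simp
      ring
    rw [prod_congr rfl fun k _ => e1 k, this, mul_sum]
    refine sum_congr rfl fun n _ => ?_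
    have hp := (p_theta h0 n).1
    have hd : 2 * (n * (n + 1) / 2) = n ^ 2 + n := by
      rw [Nat.mul_div_cancel' (Nat.even_mul_succ_self n).two_dvd]; ring
    rw [← pow_mul, hd]
    linear_combination (-B (q ^ 2) N n * q ^ (n ^ 2)) * hp
  have := tendsto_nhds_unique (h.congr e) h2
  field_simp at this
  linear_combination this
end SYZ


namespace SYZ
open Finset Filter Topology

lemma tsum_split {α β γ : Type*} (i : α → γ) (j : β → γ) (hi : Function.Injective i)
    (hj : Function.Injective j) (hd : ∀ a b, i a ≠ j b) (hc : ∀ c, (∃ a, i a = c) ∨ ∃ b, j b = c)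
    (f : γ → ℂ) (hf : Summable f) : ∑' c, f c = ∑' a, f (i a) + ∑' b, f (j b) := by
  have hcc : IsCompl (Set.range i) (Set.range j) := by
    constructor
    · rw [Set.disjoint_left]; rintro _ ⟨a, rfl⟩ ⟨b, hb⟩; exact hd a b hb.symm
    · rw [codisjoint_iff_le_sup]; intro c _; exact hc c
  exact (HasSum.add_isCompl hcc (hi.hasSum_range_iff.mpr (hf.comp_injective hi).hasSum)
    (hj.hasSum_range_iff.mpr (hf.comp_injective hj).hasSum)).tsum_eq

lemma rot (f : ℤ × ℤ → ℂ) (hf : Summable f) :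
    ∑' c, f c = ∑' c : ℤ × ℤ, f (c.1 + c.2, c.1 - c.2)
      + ∑' c : ℤ × ℤ, f (c.1 + c.2 + 1, c.1 - c.2) := by
  refine tsum_split (fun c : ℤ × ℤ => (c.1 + c.2, c.1 - c.2))
    (fun c : ℤ × ℤ => (c.1 + c.2 + 1, c.1 - c.2)) ?_ ?_ ?_ ?_ f hf
  · rintro ⟨a, b⟩ ⟨c, d⟩ h; simp only [Prod.mk.injEq] at h ⊢; omega
  · rintro ⟨a, b⟩ ⟨c, d⟩ h; simp only [Prod.mk.injEq] at h ⊢; omega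
  · rintro ⟨a, b⟩ ⟨c, d⟩ h; simp only [Prod.mk.injEq] at h; omega
  · rintro ⟨m, n⟩
    rcases Int.even_or_odd' (m + n) with ⟨k, hk | hk⟩
    · left; exact ⟨(k, m - k), by simp only [Prod.mk.injEq]; omega⟩
    · right; exact ⟨(k, m - 1 - k), by simp only [Prod.mk.injEq]; omega⟩

lemma sumZ {r : ℝ} (h0 : 0 ≤ r) (h1 : r < 1) (f : ℤ → ℂ)
    (hf : ∀ n : ℕ, ‖f n‖ ≤ 2 * (n + 1) ^ 2 * r ^ n)
    (hf' : ∀ n : ℕ, ‖f (-(n + 1))‖ ≤ 2 * (n + 1) ^ 2 * r ^ n) : Summable fun n => ‖f n‖ := by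
  have hs : Summable fun n : ℕ => 2 * ((n : ℝ) + 1) ^ 2 * r ^ n := by
    have hr : ‖r‖ < 1 := by rwa [Real.norm_of_nonneg h0]
    have a0 := summable_geometric_of_lt_one h0 h1
    have a1 := summable_pow_mul_geometric_of_norm_lt_one 1 hr
    have a2 := summable_pow_mul_geometric_of_norm_lt_one 2 hr
    refine (((a2.add (a1.mul_left 2)).add a0).mul_left 2).congr fun n => ?_
    ring
  exact Summable.of_nat_of_neg_add_one
    (Summable.of_nonneg_of_le (fun _ => norm_nonneg _) hf hs)
    (Summable.of_nonneg_of_le (fun _ => norm_nonneg _) hf' hs)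

/-- sign -/
noncomputable def sg (n : ℤ) : ℂ := (-1 : ℂ) ^ n

lemma sg_sq (n : ℤ) : sg n * sg n = 1 := by
  unfold sg; rw [← mul_zpow]; norm_num
lemma sg_add (a b : ℤ) : sg (a + b) = sg a * sg b := zpow_add₀ (by norm_num) _ _
lemma sg_sub (a b : ℤ) : sg (a - b) = sg a * sg b := by
  have h1 : sg a = sg (a - b) * sg b := by rw [← sg_add]; congr 1; ring
  rw [h1, mul_assoc, sg_sq, mul_one]
lemma sg_one : sg 1 = -1 := by simp [sg]
lemma sg_nat (n : ℕ) : sg n = (-1) ^ n := by simp [sg]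
lemma sg_neg (n : ℤ) : sg (-n) = sg n := by
  rw [← zero_sub, sg_sub]; simp [sg]
lemma sg_norm (n : ℤ) : ‖sg n‖ = 1 := by simp [sg]

/-- exponents -/
def e2 (n : ℤ) : ℕ := n.natAbs ^ 2
def e3 (n : ℤ) : ℕ := (n * (n + 1)).natAbs

lemma e2_cast (n : ℤ) : (e2 n : ℤ) = n ^ 2 := by simp [e2]
lemma e3_cast (n : ℤ) : (e3 n : ℤ) = n * (n + 1) := by
  unfold e3
  rw [Int.natCast_natAbs, abs_of_nonneg]
  rcases le_or_gt 0 n with h | h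
  · positivity
  · nlinarith
lemma e2_nat (n : ℕ) : e2 n = n ^ 2 := by simp [e2]
lemma e2_neg (n : ℕ) : e2 (-(n + 1)) = (n + 1) ^ 2 := by
  zify; rw [e2_cast]; ring
lemma e3_nat (n : ℕ) : e3 n = n * (n + 1) := by
  zify; rw [e3_cast]
lemma e3_neg (n : ℕ) : e3 (-(n + 1)) = n * (n + 1) := by
  zify; rw [e3_cast]; ring

lemma sg_e2 (q : ℂ) (n : ℤ) : (-q) ^ e2 n = sg n * q ^ e2 n := by
  rw [neg_pow]
  congr 1
  rw [← sg_nat]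
  have : ((e2 n : ℕ) : ℤ) = n + (n * (n - 1)) := by rw [e2_cast]; ring
  rw [this, sg_add]
  obtain ⟨k, hk⟩ := (Int.even_mul_pred_self n)
  rw [hk, sg_add, sg_sq, mul_one]

lemma bnd {r : ℝ} (h0 : 0 ≤ r) (h1 : r < 1) {c : ℝ} {n e : ℕ} (hc : c ≤ 2 * (n + 1) ^ 2)
    (he : n ≤ e) : c * r ^ e ≤ 2 * (n + 1) ^ 2 * r ^ n :=
  mul_le_mul hc (pow_le_pow_of_le_one h0 h1.le he) (by positivity) (by positivity)

lemma s_e2 {q : ℂ} (hq : ‖q‖ < 1) (c : ℤ → ℂ) (hc : ∀ n, ‖c n‖ ≤ (n : ℝ) ^ 2 + 1) :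
    Summable fun n : ℤ => ‖c n * q ^ e2 n‖ := by
  refine sumZ (norm_nonneg q) hq _ (fun n => ?_) (fun n => ?_)
  · rw [norm_mul, norm_pow]
    refine bnd (norm_nonneg q) hq ((hc _).trans ?_) ?_
    · push_cast; nlinarith [(Nat.cast_nonneg n : (0:ℝ) ≤ n)]
    · rw [e2_nat]; nlinarith [Nat.le_self_pow (two_ne_zero) n]
  · rw [norm_mul, norm_pow, e2_neg]
    refine bnd (norm_nonneg q) hq ((hc _).trans ?_) ?_
    · push_cast; nlinarith [(Nat.cast_nonneg n : (0:ℝ) ≤ n)]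
    · nlinarith

lemma s_e3 {q : ℂ} (hq : ‖q‖ < 1) (c : ℤ → ℂ) (hc : ∀ n, ‖c n‖ ≤ |2 * (n : ℝ) + 1|) :
    Summable fun n : ℤ => ‖c n * q ^ e3 n‖ := by
  refine sumZ (norm_nonneg q) hq _ (fun n => ?_) (fun n => ?_)
  · rw [norm_mul, norm_pow]
    refine bnd (norm_nonneg q) hq ((hc _).trans ?_) ?_
    · push_cast; rw [abs_of_nonneg (by positivity)]; nlinarith
    · rw [e3_nat]; nlinarith
  · rw [norm_mul, norm_pow, e3_neg]
    refine bnd (norm_nonneg q) hq ((hc _).trans ?_) ?_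
    · push_cast; rw [abs_of_nonpos (by linarith [(Nat.cast_nonneg n : (0:ℝ) ≤ n)])]; nlinarith
    · nlinarith

noncomputable def th (q : ℂ) : ℂ := ∑' n : ℤ, q ^ e2 n
noncomputable def Ps (q : ℂ) : ℂ := ∑' n : ℤ, q ^ e3 n
noncomputable def Dth (q : ℂ) : ℂ := ∑' n : ℤ, (n : ℂ) ^ 2 * q ^ e2 n

lemma s_th {q : ℂ} (hq : ‖q‖ < 1) : Summable fun n : ℤ => ‖q ^ e2 n‖ := by
  simpa using s_e2 hq (fun _ => 1) (fun n => by simp; positivity)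
lemma s_ths {q : ℂ} (hq : ‖q‖ < 1) : Summable fun n : ℤ => ‖sg n * q ^ e2 n‖ :=
  s_e2 hq sg (fun n => by rw [sg_norm]; nlinarith [sq_nonneg (n : ℝ)])
lemma s_Dth {q : ℂ} (hq : ‖q‖ < 1) : Summable fun n : ℤ => ‖(n : ℂ) ^ 2 * q ^ e2 n‖ :=
  s_e2 hq (fun n => (n : ℂ) ^ 2) (fun n => by simp)
lemma s_Dths {q : ℂ} (hq : ‖q‖ < 1) : Summable fun n : ℤ => ‖sg n * (n : ℂ) ^ 2 * q ^ e2 n‖ :=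
  s_e2 hq (fun n => sg n * (n : ℂ) ^ 2) (fun n => by simp [sg_norm])
lemma s_lths {q : ℂ} (hq : ‖q‖ < 1) : Summable fun n : ℤ => ‖sg n * (n : ℂ) * q ^ e2 n‖ :=
  s_e2 hq (fun n => sg n * (n : ℂ)) (fun n => by
    simp only [norm_mul, sg_norm, one_mul, Complex.norm_intCast]
    nlinarith [sq_abs (n : ℝ), sq_nonneg (|(n : ℝ)| - 1), abs_nonneg (n : ℝ)])
lemma one_le_abs (n : ℤ) : (1 : ℝ) ≤ |2 * (n : ℝ) + 1| := by
  have : (1 : ℤ) ≤ |2 * n + 1| := Int.one_le_abs (by omega)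
  exact_mod_cast this
lemma s_Ps {q : ℂ} (hq : ‖q‖ < 1) : Summable fun n : ℤ => ‖q ^ e3 n‖ := by
  simpa using s_e3 hq (fun _ => 1) (fun n => by simpa using one_le_abs n)
lemma s_Pss {q : ℂ} (hq : ‖q‖ < 1) : Summable fun n : ℤ => ‖sg n * q ^ e3 n‖ :=
  s_e3 hq sg (fun n => by rw [sg_norm]; exact one_le_abs n)
lemma s_lPss {q : ℂ} (hq : ‖q‖ < 1) :
    Summable fun n : ℤ => ‖sg n * (2 * (n : ℂ) + 1) * q ^ e3 n‖ :=
  s_e3 hq (fun n => sg n * (2 * (n : ℂ) + 1)) (fun n => by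
    rw [norm_mul, sg_norm, one_mul]
    have := Complex.norm_intCast (2 * n + 1)
    push_cast at this
    rw [this])

lemma ex_a (a b : ℤ) : e2 (a + b) + e2 (a - b) = 2 * e2 a + 2 * e2 b := by
  zify; simp only [e2_cast]; ring
lemma ex_b (a b : ℤ) : e2 (a + b + 1) + e2 (a - b) = 2 * e3 a + 2 * e3 b + 1 := by
  zify; simp only [e2_cast, e3_cast]; ring
lemma ex_c (a b : ℤ) : e3 (a + b) + e3 (a - b) = 2 * e3 a + 2 * e2 b := by
  zify; simp only [e2_cast, e3_cast]; ring
lemma ex_d (a b : ℤ) : e3 (a + b + 1) + e3 (a - b) = 2 * e2 (a + 1) + 2 * e3 b := by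
  zify; simp only [e2_cast, e3_cast]; ring

lemma sprod {f g : ℤ → ℂ} (hf : Summable fun n => ‖f n‖) (hg : Summable fun n => ‖g n‖) :
    Summable fun c : ℤ × ℤ => f c.1 * g c.2 := summable_mul_of_summable_norm hf hg

/-- `θ(q)² = θ(q²)² + q Ψ(q²)²` -/
lemma th_sq {q : ℂ} (hq : ‖q‖ < 1) : th q ^ 2 = th (q ^ 2) ^ 2 + q * Ps (q ^ 2) ^ 2 := by
  have hq2 := norm_sq_lt hq
  rw [sq, sq (th (q ^ 2)), sq (Ps (q ^ 2)), th, th, Ps,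
    tsum_mul_tsum_of_summable_norm (s_th hq) (s_th hq),
    tsum_mul_tsum_of_summable_norm (s_th hq2) (s_th hq2),
    tsum_mul_tsum_of_summable_norm (s_Ps hq2) (s_Ps hq2), ← tsum_mul_left,
    rot _ (sprod (s_th hq) (s_th hq))]
  congr 1
  · refine tsum_congr fun c => ?_
    rw [← pow_add, ex_a, pow_add, pow_mul, pow_mul]
  · refine tsum_congr fun c => ?_
    rw [← pow_add, ex_b, pow_add, pow_add, pow_mul, pow_mul]; ring

lemma th_neg (q : ℂ) : th (-q) = ∑' n : ℤ, sg n * q ^ e2 n := by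
  simp only [th, sg_e2]

lemma Dth_neg (q : ℂ) : Dth (-q) = ∑' n : ℤ, sg n * (n : ℂ) ^ 2 * q ^ e2 n := by
  simp only [Dth, sg_e2]
  exact tsum_congr fun n => by ring

/-- antisymmetric sums vanish -/
lemma anti_e3 (q : ℂ) : ∑' n : ℤ, sg n * q ^ e3 n = 0 := by
  have h : ∑' n : ℤ, sg n * q ^ e3 n = ∑' n : ℤ, -(sg n * q ^ e3 n) := by
    rw [← (Equiv.subLeft (-1 : ℤ)).tsum_eq (fun n : ℤ => sg n * q ^ e3 n)]
    refine tsum_congr fun n => ?_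
    have : e3 (-1 - n) = e3 n := by zify; simp only [e3_cast]; ring
    simp only [Equiv.subLeft_apply, this, sg_sub, sg_neg, sg_one]
    ring
  rw [tsum_neg] at h
  linear_combination h / 2

lemma anti_e2 (q : ℂ) : ∑' n : ℤ, sg n * (n : ℂ) * q ^ e2 n = 0 := by
  have h : ∑' n : ℤ, sg n * (n : ℂ) * q ^ e2 n = ∑' n : ℤ, -(sg n * (n : ℂ) * q ^ e2 n) := by
    rw [← (Equiv.neg ℤ).tsum_eq (fun n : ℤ => sg n * (n : ℂ) * q ^ e2 n)]
    refine tsum_congr fun n => ?_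
    have : e2 (-n) = e2 n := by zify; simp only [e2_cast]; ring
    simp only [Equiv.neg_apply, this, sg_neg]
    push_cast
    ring
  rw [tsum_neg] at h
  linear_combination h / 2

/-- `θ(q) θ(-q) = θ(-q²)²` -/
lemma th_mul_neg {q : ℂ} (hq : ‖q‖ < 1) : th q * th (-q) = th (-q ^ 2) ^ 2 := by
  have hq2 := norm_sq_lt hq
  have h3 : (∑' n : ℤ, sg n * (q ^ 2) ^ e3 n) * (∑' n : ℤ, sg n * (q ^ 2) ^ e3 n) = 0 := by
    rw [anti_e3, mul_zero]
  rw [th_neg, th_neg, sq (∑' n : ℤ, _), th,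
    tsum_mul_tsum_of_summable_norm (s_th hq) (s_ths hq),
    tsum_mul_tsum_of_summable_norm (s_ths hq2) (s_ths hq2),
    rot _ (sprod (s_th hq) (s_ths hq))]
  rw [tsum_mul_tsum_of_summable_norm (s_Pss hq2) (s_Pss hq2)] at h3
  have e : ∑' c : ℤ × ℤ, q ^ e2 (c.1 + c.2 + 1) * (sg (c.1 - c.2) * q ^ e2 (c.1 - c.2))
      = q * ∑' c : ℤ × ℤ, sg c.1 * (q ^ 2) ^ e3 c.1 * (sg c.2 * (q ^ 2) ^ e3 c.2) := by
    rw [← tsum_mul_left]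
    refine tsum_congr fun c => ?_
    rw [mul_left_comm, ← pow_add, ex_b, pow_add, pow_add, pow_mul, pow_mul, sg_sub]; ring
  rw [e, h3, mul_zero, add_zero]
  refine tsum_congr fun c => ?_
  rw [mul_left_comm, ← pow_add, ex_a, pow_add, pow_mul, pow_mul, sg_sub]; ring

/-- `Ψ(q)² = 2 Ψ(q²) θ(q²)` -/
lemma Ps_sq {q : ℂ} (hq : ‖q‖ < 1) : Ps q ^ 2 = 2 * Ps (q ^ 2) * th (q ^ 2) := by
  have hq2 := norm_sq_lt hq
  have e : Ps q * Ps q = Ps (q ^ 2) * th (q ^ 2)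
      + (∑' n : ℤ, (q ^ 2) ^ e2 (n + 1)) * Ps (q ^ 2) := by
    have hs : Summable fun n : ℤ => ‖(q ^ 2) ^ e2 (n + 1)‖ :=
      ((Equiv.addRight (1 : ℤ)).summable_iff (f := fun n : ℤ => ‖(q ^ 2) ^ e2 n‖)).mpr (s_th hq2)
    rw [Ps, Ps, th, tsum_mul_tsum_of_summable_norm (s_Ps hq) (s_Ps hq),
      tsum_mul_tsum_of_summable_norm (s_Ps hq2) (s_th hq2),
      tsum_mul_tsum_of_summable_norm hs (s_Ps hq2), rot _ (sprod (s_Ps hq) (s_Ps hq))]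
    congr 1
    · refine tsum_congr fun c => ?_
      rw [← pow_add, ex_c, pow_add, pow_mul, pow_mul]
    · refine tsum_congr fun c => ?_
      rw [← pow_add, ex_d, pow_add, pow_mul, pow_mul]
  have e' : ∑' n : ℤ, (q ^ 2) ^ e2 (n + 1) = th (q ^ 2) :=
    (Equiv.addRight (1 : ℤ)).tsum_eq (fun n : ℤ => (q ^ 2) ^ e2 n)
  rw [e'] at e
  linear_combination e

/-- the Wronskian identity -/
lemma wronsk {q : ℂ} (hq : ‖q‖ < 1) : Dth q * th (-q) - th q * Dth (-q)
    = q * (∑' n : ℤ, sg n * (2 * (n : ℂ) + 1) * (q ^ 2) ^ e3 n) ^ 2 := by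
  have hq2 := norm_sq_lt hq
  have h3 : (∑' n : ℤ, sg n * (n : ℂ) * (q ^ 2) ^ e2 n)
      * (∑' n : ℤ, sg n * (n : ℂ) * (q ^ 2) ^ e2 n) = 0 := by
    rw [anti_e2, mul_zero]
  rw [tsum_mul_tsum_of_summable_norm (s_lths hq2) (s_lths hq2)] at h3
  rw [th_neg, Dth_neg, th, Dth, sq (∑' n : ℤ, _),
    tsum_mul_tsum_of_summable_norm (s_Dth hq) (s_ths hq),
    tsum_mul_tsum_of_summable_norm (s_th hq) (s_Dths hq),
    tsum_mul_tsum_of_summable_norm (s_lPss hq2) (s_lPss hq2),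
    ← (sprod (s_Dth hq) (s_ths hq)).tsum_sub (sprod (s_th hq) (s_Dths hq)),
    rot _ ((sprod (s_Dth hq) (s_ths hq)).sub (sprod (s_th hq) (s_Dths hq)))]
  have e1 : ∀ m n : ℤ, (m : ℂ) ^ 2 * q ^ e2 m * (sg n * q ^ e2 n)
      - q ^ e2 m * (sg n * (n : ℂ) ^ 2 * q ^ e2 n)
      = sg n * ((m : ℂ) ^ 2 - (n : ℂ) ^ 2) * q ^ (e2 m + e2 n) := by
    intro m n; rw [pow_add]; ring
  have a1 : ∑' c : ℤ × ℤ, (((c.1 + c.2 : ℤ) : ℂ) ^ 2 * q ^ e2 (c.1 + c.2)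
        * (sg (c.1 - c.2) * q ^ e2 (c.1 - c.2))
      - q ^ e2 (c.1 + c.2) * (sg (c.1 - c.2) * ((c.1 - c.2 : ℤ) : ℂ) ^ 2 * q ^ e2 (c.1 - c.2)))
      = 4 * ∑' c : ℤ × ℤ, sg c.1 * (c.1 : ℂ) * (q ^ 2) ^ e2 c.1
        * (sg c.2 * (c.2 : ℂ) * (q ^ 2) ^ e2 c.2) := by
    rw [← tsum_mul_left]
    refine tsum_congr fun c => ?_
    rw [e1, ex_a, sg_sub, pow_add, pow_mul, pow_mul]
    push_cast; ring
  rw [a1, h3, mul_zero, zero_add, ← tsum_mul_left]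
  refine tsum_congr fun c => ?_
  simp only
  rw [e1, ex_b, sg_sub, pow_add, pow_add, pow_mul, pow_mul]
  push_cast; ring

lemma tsumZ (f : ℤ → ℂ) (hs : Summable f) :
    ∑' n, f n = ∑' n : ℕ, (f n + f (-(n + 1))) := by
  have i1 : Summable fun n : ℕ => f n := hs.comp_injective (i := fun n : ℕ => (n : ℤ))
    Nat.cast_injective
  have i2 : Summable fun n : ℕ => f (-(n + 1)) :=
    hs.comp_injective (i := fun n : ℕ => (-(n + 1) : ℤ)) (fun a b h => by
      simp only at h; omega)
  rw [tsum_of_nat_of_neg_add_one i1 i2, ← i1.tsum_add i2]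

/-- evaluation of the integer sums -/
lemma th_neg_mul {q : ℂ} (hq : ‖q‖ < 1) : th (-q) * eulerF (q ^ 2) = eulerF q ^ 2 := by
  rcases eq_or_ne q 0 with rfl | h0
  · have : th (-0) = 1 := by
      rw [th, tsum_eq_single 0]
      · simp [e2]
      · intro n hn; simp [e2, hn]
    rw [this]
    simp [eulerF]
  rw [← theta4_nat hq h0, th_neg]
  congr 1
  have hs := (s_ths hq).of_norm
  rw [tsumZ _ hs]
  refine tsum_congr fun n => ?_
  rw [e2_nat, e2_neg, sg_neg, sg_add, sg_one, sg_nat]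
  ring

lemma tri_mul (n : ℕ) : 2 * (n * (n + 1) / 2) = n * (n + 1) :=
  Nat.mul_div_cancel' (Nat.even_mul_succ_self n).two_dvd

lemma Ps_eq {q : ℂ} (hq : ‖q‖ < 1) : Ps q = 2 * psi (q ^ 2) := by
  have hs := (s_Ps hq).of_norm
  rw [Ps, psi, tsumZ _ hs, ← tsum_mul_left]
  refine tsum_congr fun n => ?_
  rw [e3_nat, e3_neg, ← pow_mul, tri_mul]
  ring

lemma lPs_eq {q : ℂ} (hq : ‖q‖ < 1) :
    ∑' n : ℤ, sg n * (2 * (n : ℂ) + 1) * q ^ e3 n = 2 * eulerF (q ^ 2) ^ 3 := by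
  have hs := (s_lPss hq).of_norm
  rw [← jacobi_cube (norm_sq_lt hq), tsumZ _ hs,
    ← tsum_mul_left]
  refine tsum_congr fun n => ?_
  rw [e3_nat, e3_neg, ← pow_mul, tri_mul, sg_neg, sg_add, sg_one, sg_nat]
  push_cast
  ring
end SYZ


namespace SYZ
open Finset Filter Topology

lemma sumN2 {q : ℂ} (hq : ‖q‖ < 1) (w : ℕ × ℕ → ℂ) (e : ℕ × ℕ → ℕ) (C : ℝ)
    (hw : ∀ c, ‖w c‖ ≤ C * ((c.1 + 1) * (c.2 + 1))) (he : ∀ c, c.1 + c.2 ≤ e c) :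
    Summable fun c : ℕ × ℕ => ‖w c * q ^ e c‖ := by
  have h1 : Summable fun n : ℕ => ((n : ℝ) + 1) * ‖q‖ ^ n := by
    have a1 := summable_pow_mul_geometric_of_norm_lt_one 1 (r := ‖q‖) (by simpa using hq)
    have a2 := summable_geometric_of_lt_one (norm_nonneg q) hq
    refine (a1.add a2).congr fun n => ?_
    simp; ring
  have h2 := (h1.mul_of_nonneg h1 (fun _ => by positivity) (fun _ => by positivity)).mul_left C
  refine Summable.of_nonneg_of_le (fun _ => norm_nonneg _) (fun c => ?_) h2
  rw [norm_mul, norm_pow]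
  calc ‖w c‖ * ‖q‖ ^ e c ≤ C * ((c.1 + 1) * (c.2 + 1)) * ‖q‖ ^ (c.1 + c.2) :=
        mul_le_mul (hw c) (pow_le_pow_of_le_one (norm_nonneg _) hq.le (he c)) (by positivity)
          ((norm_nonneg _).trans (hw c))
    _ = _ := by rw [pow_add]; ring

noncomputable def P (q : ℂ) : ℂ := ∑' c : ℕ × ℕ, ((c.1 : ℂ) + 1) * q ^ ((c.1 + 1) * (c.2 + 1))
noncomputable def O1 (q : ℂ) : ℂ :=
  ∑' c : ℕ × ℕ, (2 * (c.1 : ℂ) + 1) * q ^ ((2 * c.1 + 1) * (c.2 + 1))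
noncomputable def U (q : ℂ) : ℂ :=
  ∑' c : ℕ × ℕ, ((c.2 : ℂ) + 1) * q ^ ((2 * c.1 + 1) * (c.2 + 1))
noncomputable def S (q : ℂ) : ℂ :=
  ∑' c : ℕ × ℕ, (2 * (c.1 : ℂ) + 1) * q ^ ((2 * c.1 + 1) * (2 * c.2 + 1))

lemma norm_succ (n : ℕ) : ‖(n : ℂ) + 1‖ = n + 1 := by
  have := Complex.norm_natCast (n + 1)
  push_cast at this; exact this
lemma norm_odd (n : ℕ) : ‖2 * (n : ℂ) + 1‖ = 2 * n + 1 := by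
  have := Complex.norm_natCast (2 * n + 1)
  push_cast at this; exact this

lemma w1 (a b : ℕ) : (a : ℝ) + 1 ≤ 2 * ((a + 1) * (b + 1)) := by
  have : (0 : ℝ) ≤ a * b := by positivity
  nlinarith [(Nat.cast_nonneg a : (0:ℝ) ≤ a), (Nat.cast_nonneg b : (0:ℝ) ≤ b)]
lemma w2 (a b : ℕ) : 2 * (a : ℝ) + 1 ≤ 2 * ((a + 1) * (b + 1)) := by
  have : (0 : ℝ) ≤ a * b := by positivity
  nlinarith [(Nat.cast_nonneg a : (0:ℝ) ≤ a), (Nat.cast_nonneg b : (0:ℝ) ≤ b)]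

lemma sP' {q : ℂ} (hq : ‖q‖ < 1) :
    Summable fun c : ℕ × ℕ => ‖((c.1 : ℂ) + 1) * q ^ ((c.1 + 1) * (c.2 + 1))‖ :=
  sumN2 hq (fun c => (c.1 : ℂ) + 1) _ 2 (fun c => by rw [norm_succ]; exact w1 _ _)
    (fun c => by nlinarith [Nat.zero_le (c.1 * c.2)])
lemma sP {q : ℂ} (hq : ‖q‖ < 1) :
    Summable fun c : ℕ × ℕ => ((c.1 : ℂ) + 1) * q ^ ((c.1 + 1) * (c.2 + 1)) := (sP' hq).of_norm
lemma sP2 {q : ℂ} (hq : ‖q‖ < 1) :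
    Summable fun c : ℕ × ℕ => ((c.2 : ℂ) + 1) * q ^ ((c.1 + 1) * (c.2 + 1)) :=
  (sumN2 hq (fun c => (c.2 : ℂ) + 1) _ 2
    (fun c => by rw [norm_succ, mul_comm ((c.1 : ℝ) + 1)]; exact w1 _ _)
    (fun c => by nlinarith [Nat.zero_le (c.1 * c.2)])).of_norm
lemma sO {q : ℂ} (hq : ‖q‖ < 1) :
    Summable fun c : ℕ × ℕ => (2 * (c.1 : ℂ) + 1) * q ^ ((2 * c.1 + 1) * (c.2 + 1)) :=
  (sumN2 hq (fun c => 2 * (c.1 : ℂ) + 1) _ 2 (fun c => by rw [norm_odd]; exact w2 _ _)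
    (fun c => by nlinarith [Nat.zero_le (c.1 * c.2)])).of_norm
lemma sU {q : ℂ} (hq : ‖q‖ < 1) :
    Summable fun c : ℕ × ℕ => ((c.2 : ℂ) + 1) * q ^ ((2 * c.1 + 1) * (c.2 + 1)) :=
  (sumN2 hq (fun c => (c.2 : ℂ) + 1) _ 2
    (fun c => by rw [norm_succ, mul_comm ((c.1 : ℝ) + 1)]; exact w1 _ _)
    (fun c => by nlinarith [Nat.zero_le (c.1 * c.2)])).of_norm
lemma sS {q : ℂ} (hq : ‖q‖ < 1) :
    Summable fun c : ℕ × ℕ => (2 * (c.1 : ℂ) + 1) * q ^ ((2 * c.1 + 1) * (2 * c.2 + 1)) :=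
  (sumN2 hq (fun c => 2 * (c.1 : ℂ) + 1) _ 2 (fun c => by rw [norm_odd]; exact w2 _ _)
    (fun c => by nlinarith [Nat.zero_le (c.1 * c.2)])).of_norm

lemma P_swap (q : ℂ) : P q = ∑' c : ℕ × ℕ, ((c.2 : ℂ) + 1) * q ^ ((c.1 + 1) * (c.2 + 1)) := by
  rw [P, ← (Equiv.prodComm ℕ ℕ).tsum_eq]
  exact tsum_congr fun c => by simp [mul_comm]

lemma split1 (f : ℕ × ℕ → ℂ) (hf : Summable f) :
    ∑' c, f c = ∑' c : ℕ × ℕ, f (2 * c.1, c.2) + ∑' c : ℕ × ℕ, f (2 * c.1 + 1, c.2) := by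
  refine tsum_split (fun c : ℕ × ℕ => (2 * c.1, c.2)) (fun c : ℕ × ℕ => (2 * c.1 + 1, c.2))
    ?_ ?_ ?_ ?_ f hf
  · rintro ⟨a, b⟩ ⟨c, d⟩ h; simp only [Prod.mk.injEq] at h ⊢; omega
  · rintro ⟨a, b⟩ ⟨c, d⟩ h; simp only [Prod.mk.injEq] at h ⊢; omega
  · rintro ⟨a, b⟩ ⟨c, d⟩ h; simp only [Prod.mk.injEq] at h; omega
  · rintro ⟨m, n⟩
    rcases Nat.even_or_odd' m with ⟨k, rfl | rfl⟩
    · left; exact ⟨(k, n), rfl⟩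
    · right; exact ⟨(k, n), rfl⟩

lemma split2 (f : ℕ × ℕ → ℂ) (hf : Summable f) :
    ∑' c, f c = ∑' c : ℕ × ℕ, f (c.1, 2 * c.2) + ∑' c : ℕ × ℕ, f (c.1, 2 * c.2 + 1) := by
  refine tsum_split (fun c : ℕ × ℕ => (c.1, 2 * c.2)) (fun c : ℕ × ℕ => (c.1, 2 * c.2 + 1))
    ?_ ?_ ?_ ?_ f hf
  · rintro ⟨a, b⟩ ⟨c, d⟩ h; simp only [Prod.mk.injEq] at h ⊢; omega
  · rintro ⟨a, b⟩ ⟨c, d⟩ h; simp only [Prod.mk.injEq] at h ⊢; omega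
  · rintro ⟨a, b⟩ ⟨c, d⟩ h; simp only [Prod.mk.injEq] at h; omega
  · rintro ⟨m, n⟩
    rcases Nat.even_or_odd' n with ⟨k, rfl | rfl⟩
    · left; exact ⟨(m, k), rfl⟩
    · right; exact ⟨(m, k), rfl⟩

lemma P_O {q : ℂ} (hq : ‖q‖ < 1) : P q = O1 q + 2 * P (q ^ 2) := by
  rw [P, split1 _ (sP hq), O1, P, ← tsum_mul_left]
  congr 1
  · exact tsum_congr fun c => by push_cast; rfl
  · refine tsum_congr fun c => ?_
    rw [← pow_mul, show (2 * c.1 + 1 + 1) * (c.2 + 1) = 2 * ((c.1 + 1) * (c.2 + 1)) by ring]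
    push_cast; ring

lemma P_U {q : ℂ} (hq : ‖q‖ < 1) : P q = U q + P (q ^ 2) := by
  rw [P_swap, P_swap, split1 _ (sP2 hq), U]
  congr 1
  refine tsum_congr fun c => ?_
  rw [← pow_mul, show (2 * c.1 + 1 + 1) * (c.2 + 1) = 2 * ((c.1 + 1) * (c.2 + 1)) by ring]

lemma O_S {q : ℂ} (hq : ‖q‖ < 1) : O1 q = S q + O1 (q ^ 2) := by
  rw [O1, split2 _ (sO hq), S, O1]
  congr 1
  refine tsum_congr fun c => ?_
  rw [← pow_mul, show (2 * c.1 + 1) * (2 * c.2 + 1 + 1) = 2 * ((2 * c.1 + 1) * (c.2 + 1)) by ring]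

lemma S_neg (q : ℂ) : S (-q) = -S q := by
  rw [S, S, ← tsum_neg]
  refine tsum_congr fun c => ?_
  rw [Odd.neg_pow ⟨2 * c.1 * c.2 + c.1 + c.2, by ring⟩]; ring

lemma S_eq {q : ℂ} (hq : ‖q‖ < 1) : S q = P q - 3 * P (q ^ 2) + 2 * P ((q ^ 2) ^ 2) := by
  linear_combination -(O_S hq) - P_O hq + P_O (norm_sq_lt hq)

lemma P_neg {q : ℂ} (hq : ‖q‖ < 1) : P q - P (-q) = 2 * S q := by
  have hq' : ‖-q‖ < 1 := by rwa [norm_neg]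
  have h1 := P_O hq'
  have h2 := O_S hq'
  rw [neg_sq] at h1 h2
  rw [S_neg] at h2
  linear_combination P_O hq + O_S hq - h1 - h2

lemma Dy_eq {x : ℂ} (hx : ‖x ^ 16‖ < 1) : Dy x = S (x ^ 16) := by
  let T := {p : ℕ × ℕ // p.1 < p.2}
  have hs := sS hx
  let j : T ⊕ T → ℕ × ℕ := Sum.elim (fun p => (p.1.1, p.1.2)) (fun p => (p.1.2, p.1.1))
  have hj : Function.Injective j := by
    rintro (⟨⟨a, b⟩, h⟩ | ⟨⟨a, b⟩, h⟩) (⟨⟨c, d⟩, h'⟩ | ⟨⟨c, d⟩, h'⟩) hh <;>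
      simp [j, T] at hh h h' ⊢ <;> omega
  have h1 := tsum_split (fun r : ℕ => (r, r)) j (fun a b h => by simpa using h) hj
    (by rintro a (⟨⟨c, d⟩, h'⟩ | ⟨⟨c, d⟩, h'⟩) hh <;> simp [j] at hh h' <;> omega)
    (by
      rintro ⟨a, b⟩
      rcases lt_trichotomy a b with h | h | h
      · right; exact ⟨Sum.inl ⟨(a, b), h⟩, rfl⟩
      · left; exact ⟨a, by simp [h]⟩
      · right; exact ⟨Sum.inr ⟨(b, a), h⟩, rfl⟩) _ hs
  have hs2 := hs.comp_injective hj
  have h2 := tsum_split (Sum.inl : T → T ⊕ T) Sum.inr Sum.inl_injective Sum.inr_injective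
    (by simp) (by rintro (a | a) <;> simp) _ hs2
  have hsl := hs2.comp_injective Sum.inl_injective
  have hsr := hs2.comp_injective Sum.inr_injective
  simp only [Function.comp_def] at h2 hsl hsr
  rw [S, h1, h2, ← hsl.tsum_add hsr, Dy]
  congr 1
  · refine tsum_congr fun r => ?_
    rw [← pow_mul]
    congr 2; ring
  · refine tsum_congr fun c => ?_
    simp only [j, Sum.elim_inl, Sum.elim_inr]
    rw [← pow_mul, ← pow_mul, mul_comm (2 * c.1.2 + 1) (2 * c.1.1 + 1), ← mul_assoc]
    ring

lemma Dyz_eq {x : ℂ} (hx : ‖x ^ 32‖ < 1) :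
    Dyz x = -6 * P (x ^ 32) + 12 * P ((x ^ 32) ^ 2) := by
  have hq2 := norm_sq_lt hx
  have e : Dyz x = -2 * O1 (x ^ 32) - 4 * U (x ^ 32)
      + 2 * (P ((x ^ 32) ^ 2) + P ((x ^ 32) ^ 2)) := by
    conv_rhs => rw [P_swap]
    nth_rw 2 [← P_swap]
    rw [O1, U, P, ← (sP2 hq2).tsum_add (sP hq2), ← tsum_mul_left, ← tsum_mul_left, ← tsum_mul_left,
      ← ((sO hx).mul_left (-2)).tsum_sub ((sU hx).mul_left 4),
      ← (((sO hx).mul_left (-2)).sub ((sU hx).mul_left 4)).tsum_add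
        (((sP2 hq2).add (sP hq2)).mul_left 2), Dyz]
    refine tsum_congr fun c => ?_
    rw [show 2 * (c.1 + 1) - 1 = 2 * c.1 + 1 by omega, ← pow_mul, ← pow_mul, ← pow_mul,
      show 32 * (2 * ((c.1 + 1) * (c.2 + 1))) = 64 * (c.1 + 1) * (c.2 + 1) by ring,
      show 32 * ((2 * c.1 + 1) * (c.2 + 1)) = 32 * (2 * c.1 + 1) * (c.2 + 1) by ring]
    ring
  rw [e]
  linear_combination 2 * P_O hx + 4 * P_U hx

end SYZ


namespace SYZ
open Finset Filter Topology

lemma mem_ball {q : ℂ} (hq : ‖q‖ < 1) : q ∈ Metric.ball (0 : ℂ) 1 := by simpa using hq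

lemma eulerF_diff {q : ℂ} (hq : ‖q‖ < 1) : DifferentiableAt ℂ eulerF q :=
  ModularForm.differentiableOn_tprod_one_sub_pow.differentiableAt
    (Metric.isOpen_ball.mem_nhds (mem_ball hq))

lemma logDeriv_term (q : ℂ) (n : ℕ) :
    logDeriv (fun z : ℂ => 1 - z ^ (n + 1)) q = -((n + 1) * q ^ n / (1 - q ^ (n + 1))) := by
  have : HasDerivAt (fun z : ℂ => 1 - z ^ (n + 1)) (-((n + 1 : ℕ) * q ^ n)) q := by
    simpa using (hasDerivAt_pow (n + 1) q).const_sub 1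
  rw [logDeriv_apply, this.deriv]
  push_cast
  ring

lemma logDeriv_summable {q : ℂ} (hq : ‖q‖ < 1) :
    Summable fun n : ℕ => (n + 1) * q ^ n / (1 - q ^ (n + 1)) := by
  have h1 : Summable fun n : ℕ => ((n : ℝ) + 1) * ‖q‖ ^ n := by
    have a1 := summable_pow_mul_geometric_of_norm_lt_one 1 (r := ‖q‖) (by simpa using hq)
    have a2 := summable_geometric_of_lt_one (norm_nonneg q) hq
    refine (a1.add a2).congr fun n => ?_
    simp; ring
  refine Summable.of_norm_bounded (h1.mul_left (1 - ‖q‖)⁻¹) fun n => ?_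
  rw [norm_div, norm_mul, norm_succ, norm_pow, div_eq_inv_mul]
  have h0 : 0 < 1 - ‖q‖ := by linarith
  have h2 : 1 - ‖q‖ ≤ ‖1 - q ^ (n + 1)‖ := by
    have a := norm_sub_norm_le (1 : ℂ) (q ^ (n + 1))
    rw [norm_one, norm_pow] at a
    have b : ‖q‖ ^ (n + 1) ≤ ‖q‖ := by
      simpa using pow_le_pow_of_le_one (norm_nonneg q) hq.le (show 1 ≤ n + 1 by omega)
    linarith
  gcongr

lemma eulerF_deriv {q : ℂ} (hq : ‖q‖ < 1) : q * deriv eulerF q = -P q * eulerF q := by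
  have hF := eulerF_ne hq
  have h := logDeriv_tprod_eq_tsum (f := fun n z => 1 - z ^ (n + 1)) Metric.isOpen_ball
    (mem_ball hq) (fun i => one_sub_ne hq i) (fun i => by fun_prop)
    (by simp only [logDeriv_term]; exact (logDeriv_summable hq).neg)
    ModularForm.multipliableLocallyUniformlyOn_one_sub_pow hF
  have h' : logDeriv eulerF q = -∑' n : ℕ, (n + 1) * q ^ n / (1 - q ^ (n + 1)) := by
    rw [← tsum_neg]
    simp only [← logDeriv_term]
    exact h
  have hP : P q = q * ∑' n : ℕ, (n + 1) * q ^ n / (1 - q ^ (n + 1)) := by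
    rw [P, (sP hq).tsum_prod, ← tsum_mul_left]
    refine tsum_congr fun n => ?_
    have hn : ‖q ^ (n + 1)‖ < 1 := by
      rw [norm_pow]; exact pow_lt_one₀ (norm_nonneg _) hq (by omega)
    have : ∀ m : ℕ, ((n : ℂ) + 1) * q ^ ((n + 1) * (m + 1))
        = ((n + 1) * q ^ (n + 1)) * (q ^ (n + 1)) ^ m := fun m => by
      rw [pow_mul, pow_succ]; ring
    simp only [this]
    rw [tsum_mul_left, tsum_geometric_of_norm_lt_one hn]
    ring
  rw [logDeriv_apply, div_eq_iff hF] at h'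
  rw [h', hP]; ring

lemma th_hasDeriv {q : ℂ} (hq : ‖q‖ < 1) :
    ∃ d, HasDerivAt th d q ∧ q * d = Dth q := by
  obtain ⟨r, hr1, hr2⟩ := exists_between hq
  have hr0 : 0 < r := (norm_nonneg _).trans_lt hr1
  have hrn : ‖(r : ℂ)‖ = r := by simp [abs_of_pos hr0]
  have hu : Summable fun n : ℤ => (e2 n : ℝ) * r ^ (e2 n - 1) := by
    refine ((s_Dth (q := (r : ℂ)) (by rw [hrn]; exact hr2)).mul_left r⁻¹).congr fun n => ?_
    rw [norm_mul, norm_pow, norm_pow, hrn, Complex.norm_intCast, sq_abs]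
    have e : (e2 n : ℝ) = (n : ℝ) ^ 2 := by exact_mod_cast e2_cast n
    rw [← e]
    rcases Nat.eq_zero_or_pos (e2 n) with h | h
    · simp [h]
    · obtain ⟨m, hm⟩ := Nat.exists_eq_succ_of_ne_zero h.ne'
      rw [hm]
      simp only [Nat.succ_eq_add_one, Nat.add_sub_cancel, pow_succ]
      field_simp
  refine ⟨∑' n : ℤ, (e2 n : ℂ) * q ^ (e2 n - 1), ?_, ?_⟩
  · refine hasDerivAt_tsum_of_isPreconnected (t := Metric.ball (0 : ℂ) r) (y₀ := q)
      (g := fun n z => z ^ e2 n) (g' := fun n z => (e2 n : ℂ) * z ^ (e2 n - 1))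
      hu Metric.isOpen_ball
      (convex_ball _ _).isPreconnected (fun n y _ => hasDerivAt_pow _ _) (fun n y hy => ?_)
      (by simpa using hr1) (s_th hq).of_norm (by simpa using hr1)
    rw [norm_mul, norm_pow, Complex.norm_natCast]
    have : ‖y‖ ≤ r := by simpa using (Metric.mem_ball.1 hy).le
    gcongr
  · rw [← tsum_mul_left, Dth]
    refine tsum_congr fun n => ?_
    have e : (e2 n : ℂ) = (n : ℂ) ^ 2 := by exact_mod_cast congrArg (fun z : ℤ => (z : ℂ)) (e2_cast n)
    rw [← e]
    rcases Nat.eq_zero_or_pos (e2 n) with h | h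
    · simp [h]
    · obtain ⟨m, hm⟩ := Nat.exists_eq_succ_of_ne_zero h.ne'
      rw [hm]
      simp only [Nat.succ_eq_add_one, Nat.add_sub_cancel, pow_succ]
      ring

lemma Dth_negP {q : ℂ} (hq : ‖q‖ < 1) : Dth (-q) = th (-q) * (2 * P (q ^ 2) - 2 * P q) := by
  have hq2 := norm_sq_lt hq
  obtain ⟨d, hd, hd'⟩ := th_hasDeriv (q := -q) (by rwa [norm_neg])
  have h1 : HasDerivAt (fun z => th (-z)) (d * -1) q := hd.comp q (hasDerivAt_neg q)
  have h2 : HasDerivAt (fun z : ℂ => eulerF (z ^ 2)) (deriv eulerF (q ^ 2) * (2 * q)) q := by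
    have a : HasDerivAt (fun z : ℂ => z ^ 2) (2 * q) q := by simpa using hasDerivAt_pow 2 q
    exact HasDerivAt.comp (h₂ := eulerF) q (eulerF_diff hq2).hasDerivAt a
  have h3 : HasDerivAt (fun z : ℂ => eulerF z ^ 2) (2 * eulerF q * deriv eulerF q) q := by
    simpa using (eulerF_diff hq).hasDerivAt.fun_pow 2
  have h4 := h1.mul h2
  have h5 : (fun z => th (-z)) * (fun z : ℂ => eulerF (z ^ 2)) =ᶠ[𝓝 q] fun z => eulerF z ^ 2 := by
    filter_upwards [Metric.isOpen_ball.mem_nhds (mem_ball hq)] with z hz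
    exact th_neg_mul (by simpa using hz)
  have h6 := h4.unique (h3.congr_of_eventuallyEq h5)
  have e1 := eulerF_deriv hq
  have e2 := eulerF_deriv hq2
  have e3 := th_neg_mul hq
  have hF := eulerF_ne hq2
  apply mul_right_cancel₀ hF
  linear_combination q * h6 - 2 * th (-q) * e2 + 2 * eulerF q * e1 + 2 * P q * e3 - eulerF (q ^ 2) * hd'

lemma Dth_pos {q : ℂ} (hq : ‖q‖ < 1) : Dth q = th q * (2 * P (q ^ 2) - 2 * P (-q)) := by
  have := Dth_negP (q := -q) (by rwa [norm_neg])
  simpa using this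

/-- `S(q) = q ψ(q²)⁴` -/
lemma S_psi {q : ℂ} (hq : ‖q‖ < 1) : S q = q * psi (q ^ 2) ^ 4 := by
  have hq2 := norm_sq_lt hq
  have hq4 := norm_sq_lt hq2
  have h1 := wronsk hq
  rw [lPs_eq hq2, Dth_negP hq, Dth_pos hq] at h1
  have h2 := P_neg hq
  have h3 := th_mul_neg hq
  have h4 := th_neg_mul hq2
  have h5 := psi_mul hq2
  have F2 := eulerF_ne hq2
  have F4 := eulerF_ne hq4
  have a1 : S q * th (-q ^ 2) ^ 2 = q * eulerF ((q ^ 2) ^ 2) ^ 6 := by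
    have : 4 * (S q * (th q * th (-q))) = 4 * (q * eulerF ((q ^ 2) ^ 2) ^ 6) := by
      linear_combination h1 - 2 * th q * th (-q) * h2
    rw [h3] at this
    exact mul_left_cancel₀ (by norm_num) this
  have a2 : S q * eulerF (q ^ 2) ^ 4 = q * eulerF ((q ^ 2) ^ 2) ^ 8 := by
    calc S q * eulerF (q ^ 2) ^ 4 = S q * (eulerF (q ^ 2) ^ 2) ^ 2 := by ring
      _ = (S q * th (-q ^ 2) ^ 2) * eulerF ((q ^ 2) ^ 2) ^ 2 := by rw [← h4]; ring
      _ = _ := by rw [a1]; ring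
  have F24 : eulerF (q ^ 2) ^ 4 ≠ 0 := pow_ne_zero _ F2
  apply mul_right_cancel₀ F24
  rw [a2]
  calc q * eulerF ((q ^ 2) ^ 2) ^ 8 = q * (eulerF ((q ^ 2) ^ 2) ^ 2) ^ 4 := by ring
    _ = _ := by rw [← h5]; ring

lemma S_Ps {q : ℂ} (hq : ‖q‖ < 1) : 16 * S q = q * Ps q ^ 4 := by
  rw [S_psi hq, Ps_eq hq]; ring

lemma Ps_neg_sq {q : ℂ} (hq : ‖q‖ < 1) : th (-q) ^ 2 = th (q ^ 2) ^ 2 - q * Ps (q ^ 2) ^ 2 := by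
  have := th_sq (q := -q) (by rwa [norm_neg])
  rw [neg_sq] at this
  rw [this]; ring

lemma th_diff {q : ℂ} (hq : ‖q‖ < 1) : th q ^ 4 - th (-q) ^ 4 = q * Ps q ^ 4 := by
  have h1 := th_sq hq
  have h2 := Ps_neg_sq hq
  have h3 := Ps_sq hq
  calc th q ^ 4 - th (-q) ^ 4 = (th q ^ 2) ^ 2 - (th (-q) ^ 2) ^ 2 := by ring
    _ = q * (2 * Ps (q ^ 2) * th (q ^ 2)) ^ 2 := by rw [h1, h2]; ring
    _ = _ := by rw [← h3]; ring

noncomputable def G (q : ℂ) : ℂ := th q ^ 4 + q * Ps q ^ 4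
noncomputable def Lf (q : ℂ) : ℂ := 1 + 24 * P q - 48 * P (q ^ 2)

lemma G_step {q : ℂ} (hq : ‖q‖ < 1) : 2 * (G q - G (q ^ 2)) = 3 * (q * Ps q ^ 4) := by
  have h1 := th_sq hq
  have h2 := Ps_neg_sq hq
  have h3 := th_diff hq
  have h4 : th q ^ 4 + th (-q) ^ 4 = 2 * G (q ^ 2) := by
    calc th q ^ 4 + th (-q) ^ 4 = (th q ^ 2) ^ 2 + (th (-q) ^ 2) ^ 2 := by ring
      _ = _ := by rw [h1, h2, G]; ring
  have h5 : G q = th q ^ 4 + q * Ps q ^ 4 := rfl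
  linear_combination 2 * h5 + h4 + h3

lemma L_step {q : ℂ} (hq : ‖q‖ < 1) : Lf q - Lf (q ^ 2) = 24 * S q := by
  rw [S_eq hq, Lf, Lf]; ring

lemma H_step {q : ℂ} (hq : ‖q‖ < 1) : Lf q - G q = Lf (q ^ 2) - G (q ^ 2) := by
  linear_combination L_step hq - G_step hq / 2 + 3 / 2 * S_Ps hq

lemma lim_term {q : ℂ} (hq : ‖q‖ < 1) {e : ℕ} (he : e ≠ 0) :
    Tendsto (fun k : ℕ => (q ^ (k + 1)) ^ e) atTop (𝓝 0) := by
  have h := (tendsto_pow_atTop_nhds_zero_of_norm_lt_one hq).comp (tendsto_add_atTop_nat 1)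
  have := h.pow e
  simpa [he] using this

lemma bd_term {q : ℂ} (hq : ‖q‖ < 1) (k e : ℕ) : ‖(q ^ (k + 1)) ^ e‖ ≤ ‖q ^ e‖ := by
  rw [← pow_mul, norm_pow, norm_pow]
  exact pow_le_pow_of_le_one (norm_nonneg _) hq.le (Nat.le_mul_of_pos_left _ (by omega))

lemma P_lim {q : ℂ} (hq : ‖q‖ < 1) : Tendsto (fun k : ℕ => P (q ^ (k + 1))) atTop (𝓝 0) := by
  have := tendsto_tsum_of_dominated_convergence (𝓕 := atTop)
    (f := fun (k : ℕ) (c : ℕ × ℕ) => ((c.1 : ℂ) + 1) * (q ^ (k + 1)) ^ ((c.1 + 1) * (c.2 + 1)))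
    (g := fun _ => 0) (sP' hq)
    (fun c => by simpa using (lim_term hq (e := (c.1 + 1) * (c.2 + 1)) (by simp)).const_mul _)
    (Eventually.of_forall fun k c => by
      rw [norm_mul, norm_mul]; exact mul_le_mul_of_nonneg_left (bd_term hq _ _) (norm_nonneg _))
  simpa [P] using this

lemma th_lim {q : ℂ} (hq : ‖q‖ < 1) : Tendsto (fun k : ℕ => th (q ^ (k + 1))) atTop (𝓝 1) := by
  have := tendsto_tsum_of_dominated_convergence (𝓕 := atTop)
    (f := fun (k : ℕ) (n : ℤ) => (q ^ (k + 1)) ^ e2 n)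
    (g := fun n => if n = 0 then 1 else 0) (s_th hq)
    (fun n => by
      by_cases h : n = 0
      · simp [h, e2]
      · simpa [h] using lim_term hq (e := e2 n) (by simp [e2, h]))
    (Eventually.of_forall fun k c => bd_term hq _ _)
  simpa [th] using this

lemma norm_pow_lt {q : ℂ} (hq : ‖q‖ < 1) {k : ℕ} (hk : k ≠ 0) : ‖q ^ k‖ < 1 := by
  rw [norm_pow]; exact pow_lt_one₀ (norm_nonneg _) hq hk

lemma H_lim {q : ℂ} (hq : ‖q‖ < 1) :
    Tendsto (fun k : ℕ => Lf (q ^ (k + 1)) - G (q ^ (k + 1))) atTop (𝓝 0) := by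
  have hq2 := norm_sq_lt hq
  have p1 := P_lim hq
  have p2 := P_lim hq2
  have p4 := P_lim (norm_sq_lt hq2)
  have t := th_lim hq
  have e : ∀ k : ℕ, Lf (q ^ (k + 1)) - G (q ^ (k + 1)) = 1 + 24 * P (q ^ (k + 1))
      - 48 * P ((q ^ 2) ^ (k + 1)) - (th (q ^ (k + 1)) ^ 4 + 16 * (P (q ^ (k + 1))
      - 3 * P ((q ^ 2) ^ (k + 1)) + 2 * P (((q ^ 2) ^ 2) ^ (k + 1)))) := fun k => by
    have hk := norm_pow_lt hq (k := k + 1) (by omega)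
    rw [Lf, G, ← S_Ps hk, S_eq hk, pow_right_comm q 2, pow_right_comm (q ^ 2) 2,
      pow_right_comm q 2]
  simp only [e]
  have := (((p1.const_mul 24).const_add 1).sub (p2.const_mul 48)).sub
    ((t.pow 4).add (((p1.sub (p2.const_mul 3)).add (p4.const_mul 2)).const_mul 16))
  simpa using this

lemma L_eq_G {q : ℂ} (hq : ‖q‖ < 1) : Lf q = G q := by
  have h : ∀ k : ℕ, Lf (q ^ 2 ^ k) - G (q ^ 2 ^ k) = Lf q - G q := fun k => by
    induction k with
    | zero => simp
    | succ k ih =>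
      rw [← ih, H_step (norm_pow_lt hq (k := 2 ^ k) (by positivity)), pow_succ, pow_mul]
  have hl : Tendsto (fun k : ℕ => 2 ^ k - 1) atTop atTop :=
    (tendsto_sub_atTop_nat 1).comp (tendsto_pow_atTop_atTop_of_one_lt (by norm_num))
  have h2 := (H_lim hq).comp hl
  have h3 : Tendsto (fun _ : ℕ => Lf q - G q) atTop (𝓝 0) := by
    refine h2.congr fun k => ?_
    have : 2 ^ k - 1 + 1 = 2 ^ k := Nat.sub_add_cancel Nat.one_le_two_pow
    simp only [Function.comp_apply, this, h]
  exact sub_eq_zero.1 (tendsto_nhds_unique tendsto_const_nhds h3)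

lemma final {x t q : ℂ} (hx : ‖x‖ < 1) (ht : t = x ^ 16) (hqe : q = x ^ 32) :
    (Dyz x - 1 / 4) ^ 2 * 16 * q * eulerF (q ^ 2) ^ 24
      = (Dy x) ^ 2 * (64 * q * eulerF (q ^ 2) ^ 24 + eulerF q ^ 24) := by
  have htn : ‖t‖ < 1 := by rw [ht]; exact norm_pow_lt hx (by norm_num)
  have hq : ‖q‖ < 1 := by rw [hqe]; exact norm_pow_lt hx (by norm_num)
  have htq : t ^ 2 = q := by rw [ht, hqe]; ring
  have d1 : Dy x = t * psi q ^ 4 := by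
    rw [Dy_eq (by rw [← ht]; exact htn), ← ht, S_psi htn, htq]
  have d2 : Dyz x - 1 / 4 = -G q / 4 := by
    rw [Dyz_eq (by rw [← hqe]; exact hq), ← hqe, ← L_eq_G hq, Lf]; ring
  have k1 := th_diff hq
  have k2 := Ps_sq htn
  rw [Ps_eq htn, htq] at k2
  have k3 : G q ^ 2 = th (-q) ^ 8 + 64 * q * psi q ^ 8 := by
    have : th (-q) ^ 8 = (th q ^ 4 - q * Ps q ^ 4) ^ 2 := by rw [← k1]; ring
    rw [this, G]
    have k4 : (2 * psi q) ^ 8 = 16 * Ps q ^ 4 * th q ^ 4 := by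
      calc (2 * psi q) ^ 8 = ((2 * psi q) ^ 2) ^ 4 := by ring
        _ = _ := by rw [k2]; ring
    linear_combination - q / 4 * k4
  have k5 : th (-q) ^ 8 * eulerF (q ^ 2) ^ 24 = psi q ^ 8 * eulerF q ^ 24 := by
    calc th (-q) ^ 8 * eulerF (q ^ 2) ^ 24
        = (th (-q) * eulerF (q ^ 2)) ^ 8 * (eulerF (q ^ 2) ^ 2) ^ 8 := by ring
      _ = _ := by rw [th_neg_mul hq, ← psi_mul hq]; ring
  rw [d1, d2]
  calc (-G q / 4) ^ 2 * 16 * q * eulerF (q ^ 2) ^ 24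
      = q * (th (-q) ^ 8 * eulerF (q ^ 2) ^ 24 + 64 * q * psi q ^ 8 * eulerF (q ^ 2) ^ 24) := by
        linear_combination q * eulerF (q ^ 2) ^ 24 * k3
    _ = _ := by rw [k5]; linear_combination -(psi q ^ 8 * eulerF q ^ 24 + 64 * q * psi q ^ 8 * eulerF (q ^ 2) ^ 24) * htq

end SYZ


/-- Cleared-denominator, squared form of the statement that the generalized SYZ
map `σ(q_d) = (d_{yz} − (4q_d⁴)⁻¹)/d_y` of `ℙ¹_{2,4,4}` equals the inverse mirror
map `−2(1 + η(q)²⁴/(2⁶η(q²)²⁴))^{1/2}` with `q = x³²`. -/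
theorem syz_eq_mirror_map_244 (x : ℂ) (hx : ‖x‖ < 1) :
    (Dyz x - 1 / 4) ^ 2 * 16 * x ^ 32 * eulerF (x ^ 64) ^ 24
      = (Dy x) ^ 2 * (64 * x ^ 32 * eulerF (x ^ 64) ^ 24 + eulerF (x ^ 32) ^ 24) := by
  have h := SYZ.final hx (t := x ^ 16) (q := x ^ 32) rfl rfl
  rw [← pow_mul] at h
  exact h
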